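/- Let π : ℕ → List Bool be such that the open set U_π is progressive, and let χ : List Bool → Bool satisfy: for every p, if χ p = true then p is uniformly barred by π. If there exists q : List Bool with χ q = false, then there exists r : List Bool with χ r = false and r uniformly barred by π. -/

import Mathlib

/-!
The empty string is uniformly barred, hence so is every string, and any string outside `χ`
serves as `r`.

If the empty string were not uniformly barred, consider the leftmost path `α` all of whose initial
segments are not uniformly barred. It never leaves that set: if both one-bit extensions of a string
are uniformly barred, then so is the string (`Barred.of_children`). If `β` is lexicographically
below `α`, then at the first difference `β` branches off to the left of `α`, that is, into a
uniformly barred string, so `β ∈ U_π` (`Barred.memU`). Progressiveness gives `α ∈ U_π`, so some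
initial segment of `α` is an element of the range of `π` and therefore uniformly barred, a
contradiction.
-/

/-- The initial segment of length `n` of a stream `α`. -/
def initSeg (α : ℕ → Bool) (n : ℕ) : List Bool := (List.range n).map α

/-- Lexicographic order on Cantor space (`false < true`). -/
def lexLt (β α : ℕ → Bool) : Prop :=
  ∃ n, (∀ i, i < n → β i = α i) ∧ β n = false ∧ α n = true

/-- Membership in the open set `U_π` enumerated by `π`. -/
def memU (π : ℕ → List Bool) (α : ℕ → Bool) : Prop :=
  ∃ n k, initSeg α n = π k

/-- `U_π` is progressive. -/
def Progressive (π : ℕ → List Bool) : Prop :=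
  ∀ α, (∀ β, lexLt β α → memU π β) → memU π α

/-- `p` is uniformly barred by `π`. -/
def Barred (π : ℕ → List Bool) (p : List Bool) : Prop :=
  ∃ k, ∀ q : List Bool, q.length = k → ∃ l m, (p ++ q).take l = π m

/-- The stream `α` is greedy for `χ`: it tries to stay outside the set decided
by `χ` for as long as possible, preferring the value `false`. -/
def Greedy (χ : List Bool → Bool) (α : ℕ → Bool) : Prop :=
  ∀ n,
    (χ (initSeg α n ++ [false]) = false → α n = false) ∧
    (χ (initSeg α n ++ [false]) = true → χ (initSeg α n ++ [true]) = false → α n = true) ∧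
    (χ (initSeg α n ++ [false]) = true → χ (initSeg α n ++ [true]) = true → α n = false)

lemma initSeg_succ (α : ℕ → Bool) (n : ℕ) : initSeg α (n + 1) = initSeg α n ++ [α n] := by
  simp [initSeg, List.range_succ]

lemma initSeg_congr {α β : ℕ → Bool} {n : ℕ} (h : ∀ i, i < n → β i = α i) :
    initSeg β n = initSeg α n := by
  simpa [initSeg] using h

/-- A uniform bound may be replaced by any larger one. -/
lemma exists_take_of_le {π : ℕ → List Bool} {p : List Bool} {k : ℕ}
    (h : ∀ q : List Bool, q.length = k → ∃ l m, (p ++ q).take l = π m)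
    (q : List Bool) (hq : k ≤ q.length) : ∃ l m, (p ++ q).take l = π m := by
  obtain ⟨l, m, e⟩ := h (q.take k) (by simpa using hq)
  refine ⟨min l (p.length + k), m, ?_⟩
  rw [← e, ← List.take_take, List.take_length_add_append]

lemma Barred.of_children {π : ℕ → List Bool} {p : List Bool}
    (h : ∀ b, Barred π (p ++ [b])) : Barred π p := by
  choose k hk using h
  refine ⟨max (k false) (k true) + 1, fun q hq => ?_⟩
  cases q with
  | nil => simp at hq
  | cons b q =>
    have hb : k b ≤ q.length := by
      simp only [List.length_cons] at hq
      cases b <;> omega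
    simpa using exists_take_of_le (hk b) q hb

lemma Barred.of_nil {π : ℕ → List Bool} (h : Barred π []) (p : List Bool) : Barred π p := by
  obtain ⟨k, hk⟩ := h
  refine ⟨k, fun q hq => ?_⟩
  simpa using exists_take_of_le hk (p ++ q) (by simp; omega)

lemma Barred.memU {π : ℕ → List Bool} {β : ℕ → Bool} {n : ℕ}
    (h : Barred π (initSeg β n)) : memU π β := by
  obtain ⟨k, hk⟩ := h
  obtain ⟨l, m, e⟩ := hk ((List.range k).map fun i => β (n + i)) (by simp)
  refine ⟨min l (n + k), m, ?_⟩
  rw [← e]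
  have happ : initSeg β n ++ (List.range k).map (fun i => β (n + i)) = initSeg β (n + k) := by
    simp [initSeg, List.range_add, Function.comp_def]
  rw [happ, initSeg, initSeg, ← List.map_take, List.take_range]

open Classical in
/-- The initial segments of the leftmost path avoiding uniformly barred strings: the next bit is
`false` unless that leads to a uniformly barred string. -/
noncomputable def leftmost (π : ℕ → List Bool) : ℕ → List Bool
  | 0 => []
  | n + 1 => leftmost π n ++ [decide (Barred π (leftmost π n ++ [false]))]

lemma barred_nil {π : ℕ → List Bool} (hprog : Progressive π) : Barred π [] := by
  classical
  by_contra h0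
  have hnb : ∀ n, ¬ Barred π (leftmost π n) := by
    intro n
    induction n with
    | zero => exact h0
    | succ n ih =>
      rw [leftmost]
      by_cases hf : Barred π (leftmost π n ++ [false])
      · simp only [hf, decide_true]
        intro ht
        exact ih (.of_children fun b => by cases b <;> assumption)
      · simpa only [hf, decide_false] using hf
  let α : ℕ → Bool := fun n => decide (Barred π (leftmost π n ++ [false]))
  have hα : ∀ n, initSeg α n = leftmost π n := by
    intro n
    induction n with
    | zero => rfl
    | succ n ih => rw [initSeg_succ, ih, leftmost]
  obtain ⟨n, k, e⟩ : memU π α := by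
    refine hprog α fun β ⟨n, hlt, hβ, hαn⟩ => Barred.memU (n := n + 1) ?_
    rw [initSeg_succ, initSeg_congr hlt, hα, hβ]
    exact of_decide_eq_true hαn
  refine hnb n ⟨0, fun q hq => ⟨n, k, ?_⟩⟩
  rw [← e, ← hα, List.length_eq_zero_iff.mp hq, List.append_nil]
  exact List.take_of_length_le (by simp [initSeg])

/-- The premise of EnDec holds for the set of uniformly barred bit-strings:
if some bit-string lies outside the decidable subset given by `χ`, then some
bit-string lies outside it and is uniformly barred. -/
theorem stmt_12 (π : ℕ → List Bool) (hprog : Progressive π)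
    (χ : List Bool → Bool) (hχ : ∀ p, χ p = true → Barred π p)
    (hq : ∃ q : List Bool, χ q = false) :
    ∃ r : List Bool, χ r = false ∧ Barred π r := by
  obtain ⟨q, hq⟩ := hq
  exact ⟨q, hq, (barred_nil hprog).of_nil q⟩
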